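/- Let u > 0 and let q_1, q_2 be nonnegative reals with q_1 + q_2 = 1. Then sup_{v ∈ [0,u]} ( (1/2) ( q_1 v + q_2 · v · (1 − v/u) ) ) > u/4 if and only if q_1 > 1/2. Moreover, if 2 q_2 > 1 the supremum equals u/(8 q_2), while if 2 q_2 ≤ 1 the supremum equals q_1 u / 2. -/

import Mathlib

/-!
The hopping gain is a quadratic in `v` vanishing at `0`, with vertex `(q1 + q2) * u / (2 * q2)`.
If the vertex lies inside `[0, u]`, it is the maximizer and its value does not exceed the
frequency-division gain; otherwise the quadratic is monotone on `[0, u]` and `v = u` is optimal.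
-/

open Set

section Quadratic

theorem monotoneOn_mul_sub_mul_sq {R : Type*} [CommRing R] [LinearOrder R] [IsStrictOrderedRing R]
    {a b : R} {s : Set R} (h : ∀ v ∈ s, 2 * b * v ≤ a) :
    MonotoneOn (fun v => a * v - b * v ^ 2) s := by
  intro x hx y hy hxy
  have hslope : 0 ≤ a - b * (x + y) := by linarith [h x hx, h y hy]
  have hdiff : 0 ≤ (y - x) * (a - b * (x + y)) := mul_nonneg (sub_nonneg.2 hxy) hslope
  linear_combination hdiff

variable {K : Type*} [Field K] [LinearOrder K] [IsStrictOrderedRing K]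

theorem mul_sub_mul_sq_eq_vertex_sub {b : K} (hb : b ≠ 0) (a v : K) :
    a * v - b * v ^ 2 = a ^ 2 / (4 * b) - b * (v - a / (2 * b)) ^ 2 := by
  field_simp
  ring

theorem isGreatest_image_mul_sub_mul_sq {a b : K} {s : Set K} (hb : 0 < b)
    (hs : a / (2 * b) ∈ s) :
    IsGreatest ((fun v => a * v - b * v ^ 2) '' s) (a ^ 2 / (4 * b)) := by
  simp only [mul_sub_mul_sq_eq_vertex_sub hb.ne']
  refine ⟨⟨_, hs, by simp⟩, ?_⟩
  rintro _ ⟨v, -, rfl⟩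
  exact sub_le_self _ (by positivity)

end Quadratic

/-- The average minimum multiplexing gain per user of the robust frequency-hopping system when each
user occupies `v` of the `u` available sub-bands, for at most two active users. The number `v`
ranges over the reals. The probabilities `q1` and `q2` of one and of two active users need not sum
to `1`, which allows for no user being active. -/
noncomputable def hoppingGain (u q1 q2 : ℝ) : ℝ → ℝ :=
  fun v => (1 / 2) * (q1 * v + q2 * v * (1 - v / u))

theorem hoppingGain_eq_quadratic (u q1 q2 : ℝ) :
    hoppingGain u q1 q2 = fun v => (q1 + q2) / 2 * v - q2 / (2 * u) * v ^ 2 := by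
  funext v
  simp only [hoppingGain]
  ring

section Maximum

variable {u q1 q2 : ℝ}

theorem isGreatest_hoppingGain_vertex (hu : 0 < u) (hq : 0 ≤ q1 + q2) (h : q1 + q2 < 2 * q2) :
    IsGreatest (hoppingGain u q1 q2 '' Icc 0 u) ((q1 + q2) ^ 2 * u / (8 * q2)) := by
  have hq2 : 0 < q2 := by linarith
  have hvertex : (q1 + q2) / 2 / (2 * (q2 / (2 * u))) = (q1 + q2) / (2 * q2) * u := by
    field_simp
  have hmem : (q1 + q2) / (2 * q2) * u ∈ Icc 0 u :=
    ⟨by positivity, mul_le_of_le_one_left hu.le (div_le_one_of_le₀ h.le (by positivity))⟩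
  have hvalue : ((q1 + q2) / 2) ^ 2 / (4 * (q2 / (2 * u))) = (q1 + q2) ^ 2 * u / (8 * q2) := by
    field_simp
    ring
  rw [hoppingGain_eq_quadratic, ← hvalue]
  exact isGreatest_image_mul_sub_mul_sq (by positivity) (hvertex ▸ hmem)

theorem monotoneOn_hoppingGain (hu : 0 < u) (hq : 0 ≤ q1 + q2) (h : 2 * q2 ≤ q1 + q2) :
    MonotoneOn (hoppingGain u q1 q2) (Icc 0 u) := by
  rw [hoppingGain_eq_quadratic]
  refine monotoneOn_mul_sub_mul_sq fun v ⟨hv0, hvu⟩ => ?_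
  calc 2 * (q2 / (2 * u)) * v = 2 * q2 * (v / u) / 2 := by ring
    _ ≤ (q1 + q2) * (v / u) / 2 := by gcongr
    _ ≤ (q1 + q2) / 2 := by
      gcongr
      exact mul_le_of_le_one_right hq (div_le_one_of_le₀ hvu hu.le)

theorem isGreatest_hoppingGain_endpoint (hu : 0 < u) (hq : 0 ≤ q1 + q2) (h : 2 * q2 ≤ q1 + q2) :
    IsGreatest (hoppingGain u q1 q2 '' Icc 0 u) (q1 * u / 2) := by
  have hvalue : hoppingGain u q1 q2 u = q1 * u / 2 := by
    simp only [hoppingGain, div_self hu.ne']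
    ring
  exact hvalue ▸ (monotoneOn_hoppingGain hu hq h).map_isGreatest (isGreatest_Icc hu.le)

theorem vertex_gain_le (hu : 0 < u) (hq : 0 ≤ q1 + q2) (h : q1 + q2 < 2 * q2) :
    (q1 + q2) ^ 2 * u / (8 * q2) ≤ (q1 + q2) * u / 4 := by
  have hq2 : 0 < q2 := by linarith
  calc (q1 + q2) ^ 2 * u / (8 * q2) = (q1 + q2) * u / 4 * ((q1 + q2) / (2 * q2)) := by ring
    _ ≤ (q1 + q2) * u / 4 :=
      mul_le_of_le_one_right (by positivity) (div_le_one_of_le₀ h.le (by positivity))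

theorem lt_endpoint_gain_iff (hu : 0 < u) :
    (q1 + q2) * u / 4 < q1 * u / 2 ↔ (q1 + q2) / 2 < q1 := by
  have hfd : (q1 + q2) * u / 4 = (q1 + q2) / 2 * (u / 2) := by ring
  rw [hfd, mul_div_assoc, mul_lt_mul_iff_left₀ (half_pos hu)]

theorem example2_eta2_general (hu : 0 < u) (hq : 0 ≤ q1 + q2) :
    ((q1 + q2) * u / 4 < sSup (hoppingGain u q1 q2 '' Icc 0 u) ↔ (q1 + q2) / 2 < q1) ∧
    (q1 + q2 < 2 * q2 →
      sSup (hoppingGain u q1 q2 '' Icc 0 u) = (q1 + q2) ^ 2 * u / (8 * q2)) ∧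
    (2 * q2 ≤ q1 + q2 → sSup (hoppingGain u q1 q2 '' Icc 0 u) = q1 * u / 2) := by
  refine ⟨?_, fun h => (isGreatest_hoppingGain_vertex hu hq h).csSup_eq,
    fun h => (isGreatest_hoppingGain_endpoint hu hq h).csSup_eq⟩
  rcases lt_or_ge (q1 + q2) (2 * q2) with h | h
  · rw [(isGreatest_hoppingGain_vertex hu hq h).csSup_eq]
    exact iff_of_false (vertex_gain_le hu hq h).not_gt (by linarith)
  · rw [(isGreatest_hoppingGain_endpoint hu hq h).csSup_eq]
    exact lt_endpoint_gain_iff hu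

end Maximum

/-- **Example 2.**  With `n_max = 2`, `q₁ + q₂ = 1`, the robust-FH average minimum multiplexing
gain per user `sup_{v ∈ [0,u]} (1/2)(q₁ v + q₂ v (1 - v/u))` exceeds the FD value `u/4`
iff `q₁ > 1/2`; moreover the supremum equals `u/(8 q₂)` when `2 q₂ > 1`, and equals `q₁ u / 2`
when `2 q₂ ≤ 1`. -/
theorem example2_eta2 (u q1 q2 : ℝ) (hu : 0 < u) (hq1 : 0 ≤ q1) (hq2 : 0 ≤ q2)
    (hsum : q1 + q2 = 1) :
    (sSup ((fun v : ℝ => (1 / 2) * (q1 * v + q2 * v * (1 - v / u))) '' Set.Icc 0 u) >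
        u / 4 ↔ q1 > 1 / 2) ∧
    (2 * q2 > 1 →
      sSup ((fun v : ℝ => (1 / 2) * (q1 * v + q2 * v * (1 - v / u))) '' Set.Icc 0 u)
        = u / (8 * q2)) ∧
    (2 * q2 ≤ 1 →
      sSup ((fun v : ℝ => (1 / 2) * (q1 * v + q2 * v * (1 - v / u))) '' Set.Icc 0 u)
        = q1 * u / 2) := by
  have h := example2_eta2_general hu (add_nonneg hq1 hq2)
  simp only [hsum, one_pow, one_mul] at h
  exact h
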